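/- arXiv:0709.4403 — 2 statements merged into one kernel-verified Lean document; each statement's English description precedes it below -/
import Mathlib

section
/- For all 3×3 complex matrices X₁, X₂, X₃, X₄, X₅ the following trace identity holds: 3t(1,2,3,4,5) + 3t(1,2,3,5,4) + 3t(2,1,3,4,5) + 3t(2,1,3,5,4) = 3t(1)t(2)t(5)t(3,4) − 3t(5)t(1,2)t(3,4) − 3t(2)t(1,5)t(3,4) − 3t(1)t(2,5)t(3,4) − 3t(2)t(5)t(1,3,4) + 3t(2,5)t(1,3,4) − 3t(1)t(5)t(2,3,4) + 3t(1,5)t(2,3,4) − 4t(1,2)t(3,4,5) + 3t(3,4)t(5,1,2) + 3t(3,4)t(5,2,1) − 3t(1)t(2)t(5,3,4) + 7t(1,2)t(5,3,4) + 3t(5)t(1,2,3,4) − 2t(2)t(1,3,4,5) + 3t(2)t(1,5,3,4) + 3t(5)t(2,1,3,4) − 2t(1)t(2,3,4,5) + 3t(1)t(2,5,3,4) + 5t(2)t(5,1,3,4) + 5t(1)t(5,2,3,4) − 3t(1,2,3,4,5) + 3t(1,2,3,5,4) − 3t(1,2,5,3,4) − 3t(1,5,2,3,4) − 3t(2,1,3,4,5)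 + 3t(2,1,3,5,4) − 3t(2,1,5,3,4) − 3t(2,5,1,3,4) + 3t(5,1,2,3,4) + 3t(5,2,1,3,4). -/
open Matrix

/-!
For a permutation `σ` of the index set, let `tr_σ` be the product over the cycles of `σ` of the
traces of the corresponding words in the matrices `A k`. Written out in entries, the alternating
sum `∑ σ, sign σ * tr_σ A` is a sum of determinants, one for each assignment of matrix indices to
the letters. If there are more letters than matrix indices, the pigeonhole principle produces two
equal rows in each of these determinants, so the sum vanishes. For `3 × 3` matrices and four
letters this is the fundamental trace identity; the five-letter identity is three times its
instance at `X₁, X₂, X₅, X₃X₄`, up to cyclic rotations under the trace.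
-/

theorem update_vecCons_zero {α : Type*} {r : ℕ} (a b : α) (v : Fin r → α) :
    Function.update (vecCons a v) 0 b = vecCons b v :=
  Fin.update_cons_zero ..

theorem update_vecCons_succ {α : Type*} {r : ℕ} (a b : α) (v : Fin r → α) (k : Fin r) :
    Function.update (vecCons a v) k.succ b = vecCons a (Function.update v k b) :=
  (Fin.cons_update ..).symm

theorem update_vecCons_one {α : Type*} {r : ℕ} (a b c : α) (v : Fin r → α) :
    Function.update (vecCons a (vecCons b v)) 1 c = vecCons a (vecCons c v) := by
  rw [← Fin.succ_zero_eq_one, update_vecCons_succ, update_vecCons_zero]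

theorem update_vecCons_two {α : Type*} {r : ℕ} (a b c d : α) (v : Fin r → α) :
    Function.update (vecCons a (vecCons b (vecCons c v))) 2 d
      = vecCons a (vecCons b (vecCons d v)) := by
  rw [← Fin.succ_one_eq_two, update_vecCons_succ, update_vecCons_one]

section AlternatingTrace

variable {m n R : Type*} [Fintype m] [DecidableEq m] [Fintype n] [CommRing R]

/-- The trace monomial `tr_σ` of a family of matrices. Each letter `A k` carries a row index `i k`
and takes its column index from the letter `σ k`, so that the cycle `(k₁ k₂ … k_r)` of `σ`
contributes the factor `trace (A k₁ * A k₂ * ⋯ * A k_r)`. -/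
def permTrace (σ : Equiv.Perm m) (A : m → Matrix n n R) : R :=
  ∑ i : m → n, ∏ k, A k (i k) (i (σ k))

/-- The alternating sum of all trace monomials in a family of matrices, the left-hand side of the
fundamental trace identity. -/
def alternatingTrace (A : m → Matrix n n R) : R :=
  ∑ σ : Equiv.Perm m, (Equiv.Perm.sign σ : R) * permTrace σ A

theorem alternatingTrace_eq_sum_det (A : m → Matrix n n R) :
    alternatingTrace A = ∑ i : m → n, (Matrix.of fun k l => A l (i l) (i k)).det := by
  simp only [alternatingTrace, permTrace, det_apply', Finset.mul_sum, of_apply]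
  exact Finset.sum_comm

theorem alternatingTrace_eq_zero_of_card_lt (h : Fintype.card n < Fintype.card m)
    (A : m → Matrix n n R) : alternatingTrace A = 0 := by
  rw [alternatingTrace_eq_sum_det]
  refine Finset.sum_eq_zero fun i _ => ?_
  obtain ⟨k, k', hne, hi⟩ := Fintype.exists_ne_map_eq_of_card_lt i h
  exact det_zero_of_row_eq hne (funext fun l => by simp only [of_apply, hi])

theorem permTrace_decomposeFin_symm_zero {r : ℕ} (e : Equiv.Perm (Fin r)) (D : Matrix n n R)
    (A : Fin r → Matrix n n R) :
    permTrace (Equiv.Perm.decomposeFin.symm (0, e)) (vecCons D A) = trace D * permTrace e A := by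
  simp only [permTrace, trace, diag_apply, Finset.sum_mul_sum, ← Fintype.sum_prod_type']
  rw [← (Fin.consEquiv fun _ => n).sum_comp]
  simp [Fin.prod_univ_succ, Fin.consEquiv]

/- The permutation inserts the new letter directly after `k` in its cycle, which replaces `A k` by
`A k * D` in the corresponding trace word. -/
theorem permTrace_decomposeFin_symm_succ {r : ℕ} (e : Equiv.Perm (Fin r)) (k : Fin r)
    (D : Matrix n n R) (A : Fin r → Matrix n n R) :
    permTrace (Equiv.Perm.decomposeFin.symm ((e k).succ, e)) (vecCons D A)
      = permTrace e (Function.update A k (A k * D)) := by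
  have column_index (a : n) (i : Fin r → n) (l : Fin r) :
      (Fin.cons a i : Fin (r + 1) → n) (Equiv.swap 0 (e k).succ (e l).succ)
        = if l = k then a else i (e l) := by
    split_ifs with h
    · simp [h]
    · rw [Equiv.swap_apply_of_ne_of_ne (Fin.succ_ne_zero _) (by simpa using h), Fin.cons_succ]
  have sum_new_index (i : Fin r → n) :
      ∑ a, D a (i (e k)) * ∏ l, A l (i l) (if l = k then a else i (e l))
        = ∏ l, Function.update A k (A k * D) l (i l) (i (e l)) := by
    simp only [← Finset.mul_prod_erase Finset.univ _ (Finset.mem_univ k), if_true,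
      Function.update_self, mul_apply, Finset.sum_mul]
    refine Finset.sum_congr rfl fun a _ => ?_
    rw [← mul_assoc, mul_comm (D _ _)]
    congr 1
    refine Finset.prod_congr rfl fun l hl => ?_
    rw [if_neg (Finset.ne_of_mem_erase hl), Function.update_of_ne (Finset.ne_of_mem_erase hl)]
  simp only [permTrace, ← sum_new_index]
  rw [← (Fin.consEquiv fun _ => n).sum_comp, Fintype.sum_prod_type_right]
  simp [Fin.prod_univ_succ, Fin.consEquiv, column_index]

theorem alternatingTrace_vecCons {r : ℕ} (D : Matrix n n R) (A : Fin r → Matrix n n R) :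
    alternatingTrace (vecCons D A)
      = trace D * alternatingTrace A
        - ∑ k, alternatingTrace (Function.update A k (A k * D)) := by
  have inserted (e : Equiv.Perm (Fin r)) :
      ∑ q : Fin r, permTrace (Equiv.Perm.decomposeFin.symm (q.succ, e)) (vecCons D A)
        = ∑ k, permTrace e (Function.update A k (A k * D)) := by
    simp only [← permTrace_decomposeFin_symm_succ]
    exact (Equiv.sum_comp e _).symm
  simp only [alternatingTrace]
  rw [← Equiv.Perm.decomposeFin.symm.sum_comp, Fintype.sum_prod_type_right, Finset.mul_sum,
    Finset.sum_comm (γ := Fin r), ← Finset.sum_sub_distrib]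
  refine Finset.sum_congr rfl fun e _ => ?_
  rw [Fin.sum_univ_succ, permTrace_decomposeFin_symm_zero, ← Finset.mul_sum, ← inserted]
  simp [Equiv.Perm.decomposeFin.symm_sign, Finset.mul_sum, Fin.succ_ne_zero, sub_eq_add_neg,
    mul_left_comm]

theorem alternatingTrace_of_isEmpty [IsEmpty m] (A : m → Matrix n n R) :
    alternatingTrace A = 1 := by
  simp [alternatingTrace, permTrace]

theorem alternatingTrace_one (A : Matrix n n R) : alternatingTrace ![A] = trace A := by
  simp [alternatingTrace_vecCons, alternatingTrace_of_isEmpty]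

theorem alternatingTrace_two (A B : Matrix n n R) :
    alternatingTrace ![A, B] = trace A * trace B - trace (B * A) := by
  simp [alternatingTrace_vecCons A, alternatingTrace_one, update_vecCons_zero]

theorem alternatingTrace_three (A B C : Matrix n n R) :
    alternatingTrace ![A, B, C]
      = trace A * trace B * trace C - trace A * trace (B * C) - trace B * trace (A * C)
        - trace C * trace (A * B) + trace (A * B * C) + trace (A * C * B) := by
  simp only [alternatingTrace_vecCons A, alternatingTrace_two, Fin.sum_univ_two, cons_val_zero,
    update_vecCons_zero, update_vecCons_one, cons_val_one]
  rw [trace_mul_comm B A, trace_mul_comm C A, trace_mul_comm C B, trace_mul_comm C (B * A),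
    ← trace_mul_cycle A C B, trace_mul_cycle C A B, trace_mul_cycle B C A]
  ring

theorem alternatingTrace_four (A B C D : Matrix n n R) :
    alternatingTrace ![D, A, B, C] =
      trace A * trace B * trace C * trace D
        - trace A * trace B * trace (C * D) - trace A * trace C * trace (B * D)
        - trace B * trace C * trace (A * D) - trace A * trace D * trace (B * C)
        - trace B * trace D * trace (A * C) - trace C * trace D * trace (A * B)
        + trace (A * B) * trace (C * D) + trace (A * C) * trace (B * D)
        + trace (B * C) * trace (A * D)
        + trace A * (trace (B * C * D) + trace (C * B * D))
        + trace B * (trace (A * C * D) + trace (C * A * D))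
        + trace C * (trace (A * B * D) + trace (B * A * D))
        + trace D * (trace (A * B * C) + trace (A * C * B))
        - trace (A * B * C * D) - trace (A * C * B * D) - trace (B * A * C * D)
        - trace (B * C * A * D) - trace (C * A * B * D) - trace (C * B * A * D) := by
  simp only [alternatingTrace_vecCons D, alternatingTrace_three, Fin.sum_univ_three, cons_val,
    update_vecCons_zero, update_vecCons_one, update_vecCons_two, ← Matrix.mul_assoc]
  have rotate (M N P : Matrix n n R) : trace (M * D * N * P) = trace (N * P * M * D) := by
    rw [Matrix.mul_assoc _ N, trace_mul_cycle]
  rw [trace_mul_cycle A D B, trace_mul_cycle A D C, trace_mul_cycle B D C, rotate A B C,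
    rotate A C B, trace_mul_cycle (A * B) D C, trace_mul_cycle (A * C) D B]
  simp only [← Matrix.mul_assoc]
  ring

theorem fundamental_trace_identity (hn : Fintype.card n ≤ 3) (A B C D : Matrix n n R) :
    trace A * trace B * trace C * trace D
      - trace A * trace B * trace (C * D) - trace A * trace C * trace (B * D)
      - trace B * trace C * trace (A * D) - trace A * trace D * trace (B * C)
      - trace B * trace D * trace (A * C) - trace C * trace D * trace (A * B)
      + trace (A * B) * trace (C * D) + trace (A * C) * trace (B * D)
      + trace (B * C) * trace (A * D)
      + trace A * (trace (B * C * D) + trace (C * B * D))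
      + trace B * (trace (A * C * D) + trace (C * A * D))
      + trace C * (trace (A * B * D) + trace (B * A * D))
      + trace D * (trace (A * B * C) + trace (A * C * B))
      - trace (A * B * C * D) - trace (A * C * B * D) - trace (B * A * C * D)
      - trace (B * C * A * D) - trace (C * A * B * D) - trace (C * B * A * D) = 0 := by
  rw [← alternatingTrace_four]
  exact alternatingTrace_eq_zero_of_card_lt (by simpa using Nat.lt_succ_of_le hn) _

end AlternatingTrace

theorem five_letter_trace_identity_general {n R : Type*} [Fintype n] [CommRing R]
    (hn : Fintype.card n ≤ 3) (X₁ X₂ X₃ X₄ X₅ : Matrix n n R) :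
    3 * trace (X₁*X₂*X₃*X₄*X₅) + 3 * trace (X₁*X₂*X₃*X₅*X₄)
      + 3 * trace (X₂*X₁*X₃*X₄*X₅) + 3 * trace (X₂*X₁*X₃*X₅*X₄)
    =
      3 * trace X₁ * trace X₂ * trace X₅ * trace (X₃*X₄)
      - 3 * trace X₅ * trace (X₁*X₂) * trace (X₃*X₄)
      - 3 * trace X₂ * trace (X₁*X₅) * trace (X₃*X₄)
      - 3 * trace X₁ * trace (X₂*X₅) * trace (X₃*X₄)
      - 3 * trace X₂ * trace X₅ * trace (X₁*X₃*X₄)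
      + 3 * trace (X₂*X₅) * trace (X₁*X₃*X₄)
      - 3 * trace X₁ * trace X₅ * trace (X₂*X₃*X₄)
      + 3 * trace (X₁*X₅) * trace (X₂*X₃*X₄)
      - 4 * trace (X₁*X₂) * trace (X₃*X₄*X₅)
      + 3 * trace (X₃*X₄) * trace (X₅*X₁*X₂)
      + 3 * trace (X₃*X₄) * trace (X₅*X₂*X₁)
      - 3 * trace X₁ * trace X₂ * trace (X₅*X₃*X₄)
      + 7 * trace (X₁*X₂) * trace (X₅*X₃*X₄)
      + 3 * trace X₅ * trace (X₁*X₂*X₃*X₄)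
      - 2 * trace X₂ * trace (X₁*X₃*X₄*X₅)
      + 3 * trace X₂ * trace (X₁*X₅*X₃*X₄)
      + 3 * trace X₅ * trace (X₂*X₁*X₃*X₄)
      - 2 * trace X₁ * trace (X₂*X₃*X₄*X₅)
      + 3 * trace X₁ * trace (X₂*X₅*X₃*X₄)
      + 5 * trace X₂ * trace (X₅*X₁*X₃*X₄)
      + 5 * trace X₁ * trace (X₅*X₂*X₃*X₄)
      - 3 * trace (X₁*X₂*X₃*X₄*X₅)
      + 3 * trace (X₁*X₂*X₃*X₅*X₄)
      - 3 * trace (X₁*X₂*X₅*X₃*X₄)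
      - 3 * trace (X₁*X₅*X₂*X₃*X₄)
      - 3 * trace (X₂*X₁*X₃*X₄*X₅)
      + 3 * trace (X₂*X₁*X₃*X₅*X₄)
      - 3 * trace (X₂*X₁*X₅*X₃*X₄)
      - 3 * trace (X₂*X₅*X₁*X₃*X₄)
      + 3 * trace (X₅*X₁*X₂*X₃*X₄)
      + 3 * trace (X₅*X₂*X₁*X₃*X₄) := by
  have cycle₅ (M : Matrix n n R) : trace (M * X₅) = trace (X₅ * M) := trace_mul_comm M X₅
  have fundamental := fundamental_trace_identity hn X₁ X₂ X₅ (X₃ * X₄)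
  simp only [← Matrix.mul_assoc] at fundamental
  rw [trace_mul_cycle X₁ X₂ X₅, trace_mul_cycle X₁ X₅ X₂, trace_mul_cycle X₂ X₁ X₅] at fundamental
  rw [cycle₅ (X₃ * X₄), cycle₅ (X₁ * X₃ * X₄), cycle₅ (X₂ * X₃ * X₄),
    cycle₅ (X₁ * X₂ * X₃ * X₄), cycle₅ (X₂ * X₁ * X₃ * X₄)]
  simp only [← Matrix.mul_assoc]
  linear_combination -3 * fundamental

/-- A fundamental trace identity among five generic 3×3 matrices. -/
theorem five_letter_trace_identity (X₁ X₂ X₃ X₄ X₅ : Matrix (Fin 3) (Fin 3) ℂ) :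
    3 * trace (X₁*X₂*X₃*X₄*X₅) + 3 * trace (X₁*X₂*X₃*X₅*X₄)
      + 3 * trace (X₂*X₁*X₃*X₄*X₅) + 3 * trace (X₂*X₁*X₃*X₅*X₄)
    =
      3 * trace X₁ * trace X₂ * trace X₅ * trace (X₃*X₄)
      - 3 * trace X₅ * trace (X₁*X₂) * trace (X₃*X₄)
      - 3 * trace X₂ * trace (X₁*X₅) * trace (X₃*X₄)
      - 3 * trace X₁ * trace (X₂*X₅) * trace (X₃*X₄)
      - 3 * trace X₂ * trace X₅ * trace (X₁*X₃*X₄)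
      + 3 * trace (X₂*X₅) * trace (X₁*X₃*X₄)
      - 3 * trace X₁ * trace X₅ * trace (X₂*X₃*X₄)
      + 3 * trace (X₁*X₅) * trace (X₂*X₃*X₄)
      - 4 * trace (X₁*X₂) * trace (X₃*X₄*X₅)
      + 3 * trace (X₃*X₄) * trace (X₅*X₁*X₂)
      + 3 * trace (X₃*X₄) * trace (X₅*X₂*X₁)
      - 3 * trace X₁ * trace X₂ * trace (X₅*X₃*X₄)
      + 7 * trace (X₁*X₂) * trace (X₅*X₃*X₄)
      + 3 * trace X₅ * trace (X₁*X₂*X₃*X₄)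
      - 2 * trace X₂ * trace (X₁*X₃*X₄*X₅)
      + 3 * trace X₂ * trace (X₁*X₅*X₃*X₄)
      + 3 * trace X₅ * trace (X₂*X₁*X₃*X₄)
      - 2 * trace X₁ * trace (X₂*X₃*X₄*X₅)
      + 3 * trace X₁ * trace (X₂*X₅*X₃*X₄)
      + 5 * trace X₂ * trace (X₅*X₁*X₃*X₄)
      + 5 * trace X₁ * trace (X₅*X₂*X₃*X₄)
      - 3 * trace (X₁*X₂*X₃*X₄*X₅)
      + 3 * trace (X₁*X₂*X₃*X₅*X₄)
      - 3 * trace (X₁*X₂*X₅*X₃*X₄)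
      - 3 * trace (X₁*X₅*X₂*X₃*X₄)
      - 3 * trace (X₂*X₁*X₃*X₄*X₅)
      + 3 * trace (X₂*X₁*X₃*X₅*X₄)
      - 3 * trace (X₂*X₁*X₅*X₃*X₄)
      - 3 * trace (X₂*X₅*X₁*X₃*X₄)
      + 3 * trace (X₅*X₁*X₂*X₃*X₄)
      + 3 * trace (X₅*X₂*X₁*X₃*X₄) := by
  exact five_letter_trace_identity_general (Fintype.card_fin 3).le X₁ X₂ X₃ X₄ X₅
end

section
/- For all 3×3 complex matrices X, Y and Z, one has the matrix identity 3·X²ZY² = pol₂(X,Y,Z). -/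
open Matrix

/-- The polarization of the Cayley-Hamilton polynomial for 3x3 complex matrices. -/
noncomputable def pol (X Y : Matrix (Fin 3) (Fin 3) ℂ) : Matrix (Fin 3) (Fin 3) ℂ :=
  (trace X) • (Y * X + X * Y) + (trace (X * Y) - trace X * trace Y) • X
    + ((trace (X * X) - (trace X) ^ 2) / 2) • Y
    + (trace (Y * X * X) - trace X * trace (X * Y)
        + trace Y * (((trace X) ^ 2 - trace (X * X)) / 2)) • (1 : Matrix (Fin 3) (Fin 3) ℂ)
    + (trace Y) • (X * X)

/-- Step 1 polynomial of the reduction algorithm. -/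
noncomputable def pol₂ (X Y Z : Matrix (Fin 3) (Fin 3) ℂ) : Matrix (Fin 3) (Fin 3) ℂ :=
  pol Y (X * X * Z) + X * pol Y (X * Z) - pol X (Y * Y) * Z - pol X Y * Z * Y
    + (X * X) * pol Y Z

/-!
With `P(x, y) = yx² + xyx + x²y` the linear part in `y` of `(x + y)³`, the identity
`3x²zy² = P(y, x²z) + x P(y, xz) - P(x, y²) z - P(x, y) z y + x² P(y, z)` holds in every ring.
For `3 × 3` matrices, `P(X, Y)` is rewritten in terms of traces by polarizing Cayley–Hamilton:
apply it to `X + εY` over the dual numbers and compare the coefficients of `ε`. This avoids dividing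
by `2`, so the reduction holds over every commutative ring.
-/

section Ring

variable {A : Type*} [Ring A]

/-- The linear part in `y` of `(x + y)³` for noncommuting `x` and `y`. For `3 × 3` matrices it is
the left-hand side of the polarized Cayley–Hamilton identity. -/
def cubePolarization (x y : A) : A :=
  y * x * x + x * y * x + x * x * y

theorem map_cubePolarization {B : Type*} [Ring B] (f : A →+* B) (x y : A) :
    f (cubePolarization x y) = cubePolarization (f x) (f y) := by
  simp only [cubePolarization, map_add, map_mul]

theorem three_nsmul_sq_mul_mul_sq (x y z : A) :
    3 • (x * x * z * y * y) =
      cubePolarization y (x * x * z) + x * cubePolarization y (x * z)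
        - cubePolarization x (y * y) * z - cubePolarization x y * z * y
        + (x * x) * cubePolarization y z := by
  simp only [cubePolarization]
  noncomm_ring

variable {R : Type*} [CommRing R] [Algebra R A] {ε : R}

theorem add_smul_sq_of_mul_self_eq_zero (hε : ε * ε = 0) (x y : A) :
    (x + ε • y) * (x + ε • y) = x * x + ε • (y * x + x * y) := by
  simp only [add_mul, mul_add, smul_mul_assoc, mul_smul_comm]
  linear_combination (norm := module) hε • (y * y)

theorem add_smul_cube_of_mul_self_eq_zero (hε : ε * ε = 0) (x y : A) :
    (x + ε • y) * (x + ε • y) * (x + ε • y) = x * x * x + ε • cubePolarization x y := by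
  rw [add_smul_sq_of_mul_self_eq_zero hε, cubePolarization]
  simp only [add_mul, mul_add, smul_mul_assoc, mul_smul_comm]
  linear_combination (norm := module) hε • (y * x * y + x * y * y)

end Ring

section CommRing

variable {R : Type*} [CommRing R]

/-- The linear part in `Y` of `tr(T) T² - e₂(T) T + det(T)` at `T = X + Y`, for `3 × 3` matrices.
The second invariant `e₂` is encoded as the trace of the adjugate, which avoids the division by
`2` in `(tr(T)² - tr(T²)) / 2`. -/
def cayleyHamiltonPolarization (X Y : Matrix (Fin 3) (Fin 3) R) : Matrix (Fin 3) (Fin 3) R :=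
  trace X • (Y * X + X * Y) + trace Y • (X * X)
    - trace X.adjugate • Y - (trace X * trace Y - trace (X * Y)) • X
    + trace (X.adjugate * Y) • (1 : Matrix (Fin 3) (Fin 3) R)

theorem adjugate_eq_sq_sub_trace_smul_add_fin_three (X : Matrix (Fin 3) (Fin 3) R) :
    X.adjugate = X * X - trace X • X + trace X.adjugate • 1 := by
  rw [adjugate_fin_three]
  ext i j
  fin_cases i <;> fin_cases j <;>
    simp [mul_apply, trace_fin_three, Fin.sum_univ_three] <;> ring

theorem cube_eq_trace_smul_sub_add_det_smul_fin_three (X : Matrix (Fin 3) (Fin 3) R) :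
    X * X * X = trace X • (X * X) - trace X.adjugate • X + X.det • 1 := by
  have hdet := adjugate_mul X
  rw [adjugate_eq_sq_sub_trace_smul_add_fin_three] at hdet
  simp only [add_mul, sub_mul, smul_mul_assoc, one_mul] at hdet
  linear_combination (norm := module) hdet

theorem trace_adjugate_add_fin_three (X Y : Matrix (Fin 3) (Fin 3) R) :
    trace (X + Y).adjugate =
      trace X.adjugate + (trace X * trace Y - trace (X * Y)) + trace Y.adjugate := by
  simp only [adjugate_fin_three, trace_fin_three, mul_apply, Fin.sum_univ_three, Matrix.add_apply,
    of_apply, cons_val]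
  ring

theorem two_mul_trace_adjugate_fin_three (X : Matrix (Fin 3) (Fin 3) R) :
    2 * trace X.adjugate = trace X ^ 2 - trace (X * X) := by
  have h := congrArg trace (adjugate_eq_sq_sub_trace_smul_add_fin_three X)
  simp only [trace_add, trace_sub, trace_smul, smul_eq_mul, trace_one, Fintype.card_fin,
    Nat.cast_ofNat] at h
  linear_combination -h

theorem trace_adjugate_mul_fin_three (X Y : Matrix (Fin 3) (Fin 3) R) :
    trace (X.adjugate * Y) =
      trace (Y * X * X) - trace X * trace (X * Y) + trace Y * trace X.adjugate := by
  have h := congrArg (fun W ↦ trace (W * Y)) (adjugate_eq_sq_sub_trace_smul_add_fin_three X)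
  simp only [add_mul, sub_mul, smul_mul_assoc, one_mul, trace_add, trace_sub, trace_smul,
    smul_eq_mul, trace_mul_cycle X X Y] at h
  linear_combination h

theorem det_add_fin_three (X Y : Matrix (Fin 3) (Fin 3) R) :
    (X + Y).det = X.det + trace (X.adjugate * Y) + trace (Y.adjugate * X) + Y.det := by
  simp only [det_fin_three, adjugate_fin_three, trace_fin_three, mul_apply, Fin.sum_univ_three,
    Matrix.add_apply, of_apply, cons_val]
  ring

theorem smul_cubePolarization_eq_of_mul_self_eq_zero {ε : R} (hε : ε * ε = 0)
    (X Y : Matrix (Fin 3) (Fin 3) R) :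
    ε • cubePolarization X Y = ε • cayleyHamiltonPolarization X Y := by
  have he₂ : trace (X + ε • Y).adjugate =
      trace X.adjugate + ε * (trace X * trace Y - trace (X * Y)) := by
    simp only [trace_adjugate_add_fin_three, adjugate_smul, trace_smul, smul_eq_mul, mul_smul_comm,
      Fintype.card_fin]
    linear_combination trace Y.adjugate * hε
  have hdet : (X + ε • Y).det = X.det + ε * trace (X.adjugate * Y) := by
    simp [det_add_fin_three, adjugate_smul, pow_succ, hε]
  have hX := cube_eq_trace_smul_sub_add_det_smul_fin_three X
  have hXY := cube_eq_trace_smul_sub_add_det_smul_fin_three (X + ε • Y)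
  rw [add_smul_cube_of_mul_self_eq_zero hε, add_smul_sq_of_mul_self_eq_zero hε, he₂, hdet,
    trace_add, trace_smul, smul_eq_mul] at hXY
  rw [cayleyHamiltonPolarization]
  linear_combination (norm := module) hXY - hX +
    hε • (trace Y • (Y * X + X * Y) - (trace X * trace Y - trace (X * Y)) • Y)

theorem mapMatrix_cayleyHamiltonPolarization {S : Type*} [CommRing S] (f : R →+* S)
    (X Y : Matrix (Fin 3) (Fin 3) R) :
    f.mapMatrix (cayleyHamiltonPolarization X Y) =
      cayleyHamiltonPolarization (f.mapMatrix X) (f.mapMatrix Y) := by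
  have hadj : X.adjugate.map f = (X.map f).adjugate := f.map_adjugate X
  simp [cayleyHamiltonPolarization, Matrix.map_add, Matrix.map_mul, Matrix.map_sub,
    Matrix.map_smul' f, ← hadj, AddMonoidHom.map_trace]

theorem cubePolarization_eq_cayleyHamiltonPolarization (X Y : Matrix (Fin 3) (Fin 3) R) :
    cubePolarization X Y = cayleyHamiltonPolarization X Y := by
  let f := TrivSqZeroExt.inlHom R R
  have h := smul_cubePolarization_eq_of_mul_self_eq_zero DualNumber.eps_mul_eps
    (f.mapMatrix X) (f.mapMatrix Y)
  rw [← map_cubePolarization, ← mapMatrix_cayleyHamiltonPolarization] at h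
  ext i j
  simpa [f] using congrArg (fun W ↦ (W i j).snd) h

theorem step1_reduction_general (X Y Z : Matrix (Fin 3) (Fin 3) R) :
    (3 : R) • (X * X * Z * Y * Y) =
      cayleyHamiltonPolarization Y (X * X * Z) + X * cayleyHamiltonPolarization Y (X * Z)
        - cayleyHamiltonPolarization X (Y * Y) * Z - cayleyHamiltonPolarization X Y * Z * Y
        + (X * X) * cayleyHamiltonPolarization Y Z := by
  simp only [← cubePolarization_eq_cayleyHamiltonPolarization, ofNat_smul_eq_nsmul,
    three_nsmul_sq_mul_mul_sq]

end CommRing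

theorem pol_eq_cayleyHamiltonPolarization (X Y : Matrix (Fin 3) (Fin 3) ℂ) :
    pol X Y = cayleyHamiltonPolarization X Y := by
  have he₂ : trace X.adjugate = (trace X ^ 2 - trace (X * X)) / 2 := by
    rw [← two_mul_trace_adjugate_fin_three]
    ring
  rw [pol, cayleyHamiltonPolarization, trace_adjugate_mul_fin_three, he₂]
  module

/-- STEP 1: `3·X²ZY² = pol₂(X,Y,Z)`. -/
theorem step1_reduction (X Y Z : Matrix (Fin 3) (Fin 3) ℂ) :
    (3 : ℂ) • (X * X * Z * Y * Y) = pol₂ X Y Z := by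
  simpa only [pol₂, pol_eq_cayleyHamiltonPolarization] using step1_reduction_general X Y Z
end
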